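/- Let (A,B) be a NITA generated by a non-real b_3 of degree 3, with no nontrivial basis elements of degree 1 or 2, satisfying b̄_3·b_3 = 1 + b_8 and b_3² = c_3 + b_6 with c_3 = c̄_3 real of degree 3. Then c_3² = 1 + b_8, b̄_3·c_3 = b_3 + x_6 for some non-real x_6 ∈ B of degree 6, b_8·b_3 = x_6 + b_6·b̄_3, b̄_6·c_3 = x_6·b̄_3, c_3·b_8 = b_6 + x_6·b_3, and (b_8·b_3, b_8·b_3) ∈ {3, 4}. -/

import Mathlib

/-- A normalized table algebra datum on a commutative `ℂ`-algebra `A`: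
a distinguished basis `B` containing `1`, an involutive algebra
endomorphism `bar` permuting `B`, a bilinear form for which `B` is
orthonormal and which satisfies `(a, bc) = (a·b̄, c)`, nonnegative real
structure constants, and a degree homomorphism positive on `B`. -/
structure TAData (A : Type) [CommRing A] [Algebra ℂ A] : Type where
  B : Finset A
  one_mem : (1 : A) ∈ B
  indep : LinearIndependent ℂ (fun b : {x : A // x ∈ B} => (b : A))
  span_top : Submodule.span ℂ (B : Set A) = ⊤
  bar : A →ₐ[ℂ] A
  bar_bar : ∀ a : A, bar (bar a) = a
  bar_mem : ∀ b ∈ B, bar b ∈ B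
  ip : A →ₗ[ℂ] A →ₗ[ℂ] ℂ
  ip_symm : ∀ a b : A, ip a b = ip b a
  ip_self : ∀ b ∈ B, ip b b = 1
  ip_ne : ∀ b ∈ B, ∀ c ∈ B, b ≠ c → ip b c = 0
  ip_assoc : ∀ a b c : A, ip a (b * c) = ip (a * bar b) c
  struct_nonneg : ∀ b ∈ B, ∀ c ∈ B, ∀ d ∈ B, ∃ r : ℝ, 0 ≤ r ∧ ip (b * c) d = (r : ℂ)
  deg : A →ₐ[ℂ] ℂ
  deg_pos : ∀ b ∈ B, ∃ r : ℝ, 0 < r ∧ deg b = (r : ℂ)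

namespace TAData

variable {A : Type} [CommRing A] [Algebra ℂ A]

/-- Integrality (making a table algebra a NITA): all structure constants are
nonnegative integers and all degrees are positive integers. -/
def Integral (T : TAData A) : Prop :=
  (∀ b ∈ T.B, ∀ c ∈ T.B, ∀ d ∈ T.B, ∃ n : ℕ, T.ip (b * c) d = (n : ℂ)) ∧
  (∀ b ∈ T.B, ∃ n : ℕ, 0 < n ∧ T.deg b = (n : ℂ))

/-- `L₁(B) = {1}` and `L₂(B) = ∅`: no nontrivial basis elements of degree 1 or 2. -/
def NoSmall (T : TAData A) : Prop :=
  (∀ b ∈ T.B, T.deg b = 1 → b = 1) ∧ (∀ b ∈ T.B, T.deg b ≠ 2)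

/-- The table algebra is generated (as an algebra) by `b` (and its conjugate). -/
def GeneratedBy (T : TAData A) (b : A) : Prop :=
  Algebra.adjoin ℂ ({b, T.bar b} : Set A) = ⊤

/-- A table subset of `B`: contains `1`, closed under the involution and under
supports of products. -/
def IsTableSubset (T : TAData A) (C : Set A) : Prop :=
  C ⊆ ↑T.B ∧ (1 : A) ∈ C ∧ (∀ b ∈ C, T.bar b ∈ C) ∧
    ∀ b ∈ C, ∀ c ∈ C, ∀ d ∈ T.B, T.ip (b * c) d ≠ 0 → d ∈ C

end TAData

/-!
In a table algebra, `c̄c = 1 + d` turns inner products of multiples of `c` into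
`(cu, cv) = (u, v) + (u v̄, d)`. Applied to `b₃` this shows that `b̄₃c₃` is irreducible unless
`c₃² = 1 + b₈`. It is not, because it contains `b₃`; so `b̄₃c₃` has norm `2` and hence equals
`b₃ + x₆`. As `(b₃c₃, b̄₃c₃) = (c₃², b₃²) = 0`, the constituents `x̄₆` of `b₃c₃` and `x₆` of `b̄₃c₃`
differ.

For the last assertion, `(b₈b₃, b₈b₃) = 1 + (b₆c₃, b₆c₃)`. Since `b₆c₃` has degree `18`, contains
`b₈` and does not contain `1`, the other constituents have degrees at least `3` and sum `10`, so
there are at most three of them. Three would include two of degree `3`, say `u` and `v`. If `u = v`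
then `b₆` occurs twice in `c₃u`, of degree only `9`; if `u ≠ v` then `c₃u` and `c₃v` are orthogonal
but share `b₆`. If there are two and they coincide, say with `v`, then `v` has degree `5` and `b₆`
occurs twice in `c₃v`, whose norm is then at least `5`, while `(c₃v, c₃v) = 1 + (v v̄, b₈) ≤ 4`.
-/

namespace TAData

variable {A : Type} [CommRing A] [Algebra ℂ A] (T : TAData A) {b c d u v w x y z : A}

lemma ip_mul_left (x y z : A) : T.ip (x * y) z = T.ip y (T.bar x * z) := by
  rw [T.ip_assoc, T.bar_bar, mul_comm]

lemma ip_mul_right (x y z : A) : T.ip (x * y) z = T.ip x (T.bar y * z) := by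
  rw [mul_comm, ip_mul_left]

lemma ip_mul_bar (w c u : A) : T.ip (w * T.bar c) u = T.ip (c * u) w := by
  rw [ip_mul_right, T.bar_bar, T.ip_symm]

lemma ip_add_self (y z : A) :
    T.ip (y + z) (y + z) = T.ip y y + 2 * T.ip y z + T.ip z z := by
  simp only [map_add, LinearMap.add_apply, T.ip_symm z y]
  ring

lemma ip_mul_mul_of_bar_mul_self (h : T.bar c * c = 1 + d) (u v : A) :
    T.ip (c * u) (c * v) = T.ip u v + T.ip (u * T.bar v) d := by
  have hcv : T.bar c * (c * v) = v + v * d := by linear_combination v * h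
  rw [ip_mul_left, hcv, map_add, T.ip_assoc]

lemma ip_mul_mul_congr (h : T.bar b * b = T.bar c * c) (u v : A) :
    T.ip (b * u) (b * v) = T.ip (c * u) (c * v) := by
  rw [ip_mul_left, ip_mul_left, ← mul_assoc, ← mul_assoc, h]

lemma ip_eq_zero_of_deg_ne (hb : b ∈ T.B) (hc : c ∈ T.B) (h : T.deg b ≠ T.deg c) :
    T.ip b c = 0 :=
  T.ip_ne b hb c hc fun hbc => h (by rw [hbc])

lemma ip_sum_of_mem {S : Finset A} (hS : S ⊆ T.B) (hb : b ∈ S) : T.ip (∑ s ∈ S, s) b = 1 := by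
  rw [map_sum, LinearMap.sum_apply, Finset.sum_eq_single_of_mem b hb fun s hs hsb =>
    T.ip_ne s (hS hs) b (hS hb) hsb, T.ip_self b (hS hb)]

lemma ip_sum_self {S : Finset A} (hS : S ⊆ T.B) :
    T.ip (∑ s ∈ S, s) (∑ s ∈ S, s) = S.card := by
  rw [map_sum, Finset.sum_congr rfl fun s hs => T.ip_sum_of_mem hS hs]
  simp

lemma eq_sum_ip (y : A) : y = ∑ b ∈ T.B, T.ip y b • b := by
  have hy : y ∈ Submodule.span ℂ (T.B : Set A) := T.span_top ▸ Submodule.mem_top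
  obtain ⟨f, -, rfl⟩ := Submodule.mem_span_finset.1 hy
  refine Finset.sum_congr rfl fun b hb => ?_
  rw [map_sum, LinearMap.sum_apply, Finset.sum_eq_single_of_mem b hb fun c hc hcb => by
    simp [T.ip_ne c hc b hb hcb]]
  simp [T.ip_self b hb]

lemma ext_ip (h : ∀ b ∈ T.B, T.ip y b = T.ip z b) : y = z := by
  rw [T.eq_sum_ip y, T.eq_sum_ip z, Finset.sum_congr rfl fun b hb => by rw [h b hb]]

lemma ip_eq_sum (y z : A) : T.ip y z = ∑ b ∈ T.B, T.ip y b * T.ip z b := by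
  conv_lhs => rw [T.eq_sum_ip z]
  simp [mul_comm]

/-- The element representing `z ↦ χ z̄` for a character `χ`. It is a common eigenvector of all
multiplications, `y` acting by `χ y`. For `χ = deg` this gives `deg ȳ = deg y`. -/
def charVec (χ : A →ₐ[ℂ] ℂ) : A := ∑ b ∈ T.B, χ (T.bar b) • b

lemma ip_charVec (χ : A →ₐ[ℂ] ℂ) (z : A) : T.ip (T.charVec χ) z = χ (T.bar z) := by
  conv_rhs => rw [T.eq_sum_ip z]
  simp [charVec, T.ip_symm z, mul_comm]

lemma mul_charVec (χ : A →ₐ[ℂ] ℂ) (y : A) : y * T.charVec χ = χ y • T.charVec χ :=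
  T.ext_ip fun d _ => by
    rw [ip_mul_left, ip_charVec, map_smul, LinearMap.smul_apply, ip_charVec, map_mul, T.bar_bar,
      map_mul, smul_eq_mul]

open scoped ComplexOrder in
lemma deg_bar_charVec_deg_ne_zero : T.deg (T.bar (T.charVec T.deg)) ≠ 0 := by
  have hpos : ∀ b ∈ T.B, 0 < T.deg (T.bar b) := fun b hb => by
    obtain ⟨r, hr, hbr⟩ := T.deg_pos _ (T.bar_mem b hb)
    rw [hbr]
    exact_mod_cast hr
  simp only [charVec, map_sum, map_smul, smul_eq_mul]
  exact (Finset.sum_pos (fun b hb => mul_pos (hpos b hb) (hpos b hb)) ⟨1, T.one_mem⟩).ne'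

lemma deg_bar (y : A) : T.deg (T.bar y) = T.deg y := by
  have h := congrArg (fun z => T.deg (T.bar z)) (T.mul_charVec T.deg y)
  simp only [map_mul, map_smul, smul_eq_mul] at h
  exact mul_right_cancel₀ T.deg_bar_charVec_deg_ne_zero h

/-- The nonnegative integral combinations of basis elements. The multiplicity of `b` as a
constituent of `y` is the coefficient `T.ip y b`. -/
def cone : AddSubmonoid A where
  carrier := {y | ∀ b ∈ T.B, ∃ n : ℕ, T.ip y b = n}
  zero_mem' _ _ := ⟨0, by simp⟩
  add_mem' hy hz b hb := by
    obtain ⟨m, hm⟩ := hy b hb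
    obtain ⟨n, hn⟩ := hz b hb
    exact ⟨m + n, by simp [hm, hn]⟩

variable {T}

lemma mem_cone_of_mem (hb : b ∈ T.B) : b ∈ T.cone := fun c hc => by
  by_cases hbc : b = c
  · exact ⟨1, by rw [← hbc, T.ip_self b hb, Nat.cast_one]⟩
  · exact ⟨0, by rw [T.ip_ne b hb c hc hbc, Nat.cast_zero]⟩

lemma Integral.mul_mem_cone (hInt : T.Integral) (hb : b ∈ T.B) (hc : c ∈ T.B) :
    b * c ∈ T.cone :=
  hInt.1 b hb c hc

lemma exists_ip_eq_natCast (hy : y ∈ T.cone) (hz : z ∈ T.cone) : ∃ n : ℕ, T.ip y z = n := by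
  choose! m hm using hy
  choose! n hn using hz
  refine ⟨∑ b ∈ T.B, m b * n b, ?_⟩
  rw [ip_eq_sum, Finset.sum_congr rfl fun b hb => by rw [hm b hb, hn b hb]]
  push_cast
  rfl

lemma Integral.exists_deg_eq_natCast (hInt : T.Integral) (hy : y ∈ T.cone) :
    ∃ n : ℕ, T.deg y = n := by
  choose! m hm using hy
  choose! n _ hn using hInt.2
  refine ⟨∑ b ∈ T.B, m b * n b, ?_⟩
  conv_lhs => rw [T.eq_sum_ip y]
  rw [map_sum, Finset.sum_congr rfl fun b hb => by rw [map_smul, hm b hb, hn b hb]]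
  push_cast
  rfl

lemma exists_eq_nsmul_add (hy : y ∈ T.cone) (hx : x ∈ T.B) {m : ℕ} (h : T.ip y x = m) :
    ∃ z ∈ T.cone, y = m • x + z := by
  refine ⟨y - m • x, fun b hb => ?_, by abel⟩
  simp only [map_sub, map_nsmul, LinearMap.sub_apply, LinearMap.smul_apply]
  by_cases hxb : x = b
  · subst hxb
    exact ⟨0, by simp [h, T.ip_self x hx]⟩
  · simpa only [T.ip_ne x hx b hb hxb, smul_zero, sub_zero] using hy b hb

lemma exists_eq_add_of_ip_ne_zero (hy : y ∈ T.cone) (hx : x ∈ T.B) (h : T.ip y x ≠ 0) :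
    ∃ z ∈ T.cone, y = x + z := by
  obtain ⟨n, hn⟩ := hy x hx
  obtain ⟨k, rfl⟩ := Nat.exists_eq_succ_of_ne_zero (Nat.cast_ne_zero.1 (hn ▸ h))
  obtain ⟨z, hz, rfl⟩ := exists_eq_nsmul_add hy hx hn
  exact ⟨k • x + z, add_mem (nsmul_mem (mem_cone_of_mem hx) k) hz, by rw [succ_nsmul']; abel⟩

lemma exists_eq_add_of_ne_zero (hy : y ∈ T.cone) (h : y ≠ 0) :
    ∃ b ∈ T.B, ∃ z ∈ T.cone, y = b + z := by
  by_contra! hne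
  refine h (T.ext_ip fun b hb => ?_)
  rw [map_zero, LinearMap.zero_apply]
  by_contra hyb
  obtain ⟨z, hz, hyz⟩ := exists_eq_add_of_ip_ne_zero hy hb hyb
  exact hne b hb z hz hyz

lemma ip_add_ne_zero (hw : w ∈ T.B) (hy : y ∈ T.cone) (hz : z ∈ T.cone) :
    T.ip (w + y) (w + z) ≠ 0 := by
  have hwc := mem_cone_of_mem hw
  obtain ⟨m, hm⟩ := exists_ip_eq_natCast hwc hz
  obtain ⟨n, hn⟩ := exists_ip_eq_natCast hy (add_mem hwc hz)
  rw [map_add T.ip, LinearMap.add_apply, map_add (T.ip w), T.ip_self w hw, hm, hn]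
  exact_mod_cast (by omega : 1 + m + n ≠ 0)

lemma ip_ne_zero_of_common_constituent (hy : y ∈ T.cone) (hz : z ∈ T.cone) (hw : w ∈ T.B)
    (hyw : T.ip y w ≠ 0) (hzw : T.ip z w ≠ 0) : T.ip y z ≠ 0 := by
  obtain ⟨p, hp, rfl⟩ := exists_eq_add_of_ip_ne_zero hy hw hyw
  obtain ⟨q, hq, rfl⟩ := exists_eq_add_of_ip_ne_zero hz hw hzw
  exact ip_add_ne_zero hw hp hq

lemma ip_self_ne_zero (hy : y ∈ T.cone) (h : y ≠ 0) : T.ip y y ≠ 0 := by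
  obtain ⟨b, hb, z, hz, rfl⟩ := exists_eq_add_of_ne_zero hy h
  exact ip_add_ne_zero hb hz hz

lemma exists_ip_add_self (hb : b ∈ T.B) (hz : z ∈ T.cone) :
    ∃ m n : ℕ, T.ip z z = n ∧ T.ip (b + z) (b + z) = (1 + 2 * m + n : ℕ) := by
  obtain ⟨m, hm⟩ := exists_ip_eq_natCast (mem_cone_of_mem hb) hz
  obtain ⟨n, hn⟩ := exists_ip_eq_natCast hz hz
  refine ⟨m, n, hn, ?_⟩
  rw [ip_add_self, T.ip_self b hb, hm, hn]
  push_cast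
  rfl

lemma mem_of_ip_self_eq_one (hy : y ∈ T.cone) (h : T.ip y y = 1) : y ∈ T.B := by
  obtain ⟨b, hb, z, hz, rfl⟩ := exists_eq_add_of_ne_zero hy (by rintro rfl; simp at h)
  obtain ⟨m, n, hn, hbz⟩ := exists_ip_add_self hb hz
  have hmn : 1 + 2 * m + n = 1 := by exact_mod_cast hbz.symm.trans h
  obtain rfl : n = 0 := by omega
  have hz0 : z = 0 := not_imp_comm.1 (ip_self_ne_zero hz) (by simpa using hn)
  rwa [hz0, add_zero]

lemma exists_eq_add_of_ip_self_eq_two (hy : y ∈ T.cone) (h : T.ip y y = 2) (hb : b ∈ T.B)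
    (hyb : T.ip y b ≠ 0) : ∃ x ∈ T.B, y = b + x := by
  obtain ⟨x, hx, rfl⟩ := exists_eq_add_of_ip_ne_zero hy hb hyb
  obtain ⟨m, n, hn, hbx⟩ := exists_ip_add_self hb hx
  have hmn : 1 + 2 * m + n = 2 := by exact_mod_cast hbx.symm.trans h
  obtain rfl : n = 1 := by omega
  exact ⟨x, mem_of_ip_self_eq_one hx (by simpa using hn), rfl⟩

lemma Integral.eq_zero_of_deg_eq_zero (hInt : T.Integral) (hy : y ∈ T.cone) (h : T.deg y = 0) :
    y = 0 := by
  by_contra hy0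
  obtain ⟨b, hb, z, hz, rfl⟩ := exists_eq_add_of_ne_zero hy hy0
  obtain ⟨m, hm0, hm⟩ := hInt.2 b hb
  obtain ⟨n, hn⟩ := hInt.exists_deg_eq_natCast hz
  rw [map_add, hm, hn] at h
  have hmn : m + n = 0 := by exact_mod_cast h
  omega

lemma Integral.mul_le_of_ip_eq (hInt : T.Integral) (hy : y ∈ T.cone) (hx : x ∈ T.B)
    {m k n : ℕ} (h : T.ip y x = m) (hdx : T.deg x = k) (hdy : T.deg y = n) : m * k ≤ n := by
  obtain ⟨z, hz, rfl⟩ := exists_eq_nsmul_add hy hx h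
  obtain ⟨l, hl⟩ := hInt.exists_deg_eq_natCast hz
  rw [map_add, map_nsmul, hdx, hl, nsmul_eq_mul] at hdy
  have hmkl : m * k + l = n := by exact_mod_cast hdy
  omega

lemma Integral.exists_three_le_deg (hInt : T.Integral) (hSmall : T.NoSmall) (hb : b ∈ T.B)
    (h1 : b ≠ 1) : ∃ n : ℕ, 3 ≤ n ∧ T.deg b = n := by
  obtain ⟨n, hn0, hn⟩ := hInt.2 b hb
  have hn1 : n ≠ 1 := fun h => h1 (hSmall.1 b hb (by rw [hn, h, Nat.cast_one]))
  have hn2 : n ≠ 2 := fun h => hSmall.2 b hb (by rw [hn, h, Nat.cast_two])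
  exact ⟨n, by omega, hn⟩

lemma Integral.exists_eq_add_three_le_deg (hInt : T.Integral) (hSmall : T.NoSmall)
    (hy : y ∈ T.cone) (h0 : y ≠ 0) (h1 : T.ip y 1 = 0) :
    ∃ b ∈ T.B, ∃ z ∈ T.cone, T.ip z 1 = 0 ∧ y = b + z ∧ ∃ n : ℕ, 3 ≤ n ∧ T.deg b = n := by
  obtain ⟨b, hb, z, hz, rfl⟩ := exists_eq_add_of_ne_zero hy h0
  have hb1 : b ≠ 1 := by
    rintro rfl
    exact ip_add_ne_zero T.one_mem hz (zero_mem _) (by rwa [add_zero])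
  rw [map_add, LinearMap.add_apply, T.ip_ne b hb 1 T.one_mem hb1, zero_add] at h1
  exact ⟨b, hb, z, hz, h1, rfl, hInt.exists_three_le_deg hSmall hb hb1⟩

lemma Integral.deg_ne_one (hInt : T.Integral) (hSmall : T.NoSmall) (hy : y ∈ T.cone)
    (h1 : T.ip y 1 = 0) : T.deg y ≠ 1 := by
  intro h
  obtain ⟨b, -, z, hz, -, rfl, m, hm3, hm⟩ :=
    hInt.exists_eq_add_three_le_deg hSmall hy (by rintro rfl; simp at h) h1
  obtain ⟨n, hn⟩ := hInt.exists_deg_eq_natCast hz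
  rw [map_add, hm, hn] at h
  have hmn : m + n = 1 := by exact_mod_cast h
  omega

lemma Integral.decomposition_of_deg_ten (hInt : T.Integral) (hSmall : T.NoSmall)
    (hy : y ∈ T.cone) (hdy : T.deg y = 10) (h1 : T.ip y 1 = 0) :
    y ∈ T.B ∨ (∃ u ∈ T.B, ∃ v ∈ T.B, y = u + v) ∨
      ∃ u ∈ T.B, ∃ v ∈ T.B, ∃ z ∈ T.cone, T.deg u = 3 ∧ T.deg v = 3 ∧ y = u + v + z := by
  obtain ⟨u, hu, p, hp, hp1, rfl, k, hk3, hk⟩ :=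
    hInt.exists_eq_add_three_le_deg hSmall hy (by rintro rfl; simp at hdy) h1
  by_cases hp0 : p = 0
  · exact .inl (by rwa [hp0, add_zero])
  obtain ⟨v, hv, q, hq, hq1, rfl, l, hl3, hl⟩ :=
    hInt.exists_eq_add_three_le_deg hSmall hp hp0 hp1
  by_cases hq0 : q = 0
  · exact .inr (.inl ⟨u, hu, v, hv, by rw [hq0, add_zero]⟩)
  obtain ⟨t, ht, r, hr, -, rfl, m, hm3, hm⟩ := hInt.exists_eq_add_three_le_deg hSmall hq hq0 hq1
  obtain ⟨n, hn⟩ := hInt.exists_deg_eq_natCast hr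
  rw [map_add, map_add, map_add, hk, hl, hm, hn] at hdy
  have hsum : k + (l + (m + n)) = 10 := by exact_mod_cast hdy
  have hpair : k = 3 ∧ l = 3 ∨ k = 3 ∧ m = 3 ∨ l = 3 ∧ m = 3 := by omega
  refine .inr (.inr ?_)
  rcases hpair with ⟨rfl, rfl⟩ | ⟨rfl, rfl⟩ | ⟨rfl, rfl⟩
  · exact ⟨u, hu, v, hv, t + r, add_mem (mem_cone_of_mem ht) hr, hk, hl, by abel⟩
  · exact ⟨u, hu, t, ht, v + r, add_mem (mem_cone_of_mem hv) hr, hk, hm, by abel⟩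
  · exact ⟨v, hv, t, ht, u + r, add_mem (mem_cone_of_mem hu) hr, hl, hm, by abel⟩

lemma Integral.bar_mul_self_eq_of_bar_mul_notMem (hInt : T.Integral) (hb : b ∈ T.B)
    (hc : c ∈ T.B) (hd : d ∈ T.B) (hdc : T.deg c = 3) (hdd : T.deg d = 8)
    (h : T.bar b * b = 1 + d) (hbc : T.bar b * c ∉ T.B) : T.bar c * c = 1 + d := by
  have hcc : T.bar c * c ∈ T.cone := hInt.mul_mem_cone (T.bar_mem c hc) hc
  have hd1 : T.ip 1 d = 0 := T.ip_eq_zero_of_deg_ne T.one_mem hd (by norm_num [hdd])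
  have hcc1 : T.ip (T.bar c * c) 1 = 1 := by
    rw [ip_mul_left, T.bar_bar, mul_one, T.ip_self c hc]
  obtain ⟨p, hp, hcp⟩ := exists_eq_add_of_ip_ne_zero hcc T.one_mem (by simp [hcc1])
  have hpd : T.ip p d ≠ 0 := fun hpd => hbc <|
    mem_of_ip_self_eq_one (hInt.mul_mem_cone (T.bar_mem b hb) hc) <| by
      rw [T.ip_mul_mul_of_bar_mul_self (d := d) (by rw [T.bar_bar, mul_comm, h]), T.ip_self c hc,
        mul_comm c, hcp, map_add, LinearMap.add_apply, hd1, hpd, add_zero, add_zero]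
  obtain ⟨q, hq, rfl⟩ := exists_eq_add_of_ip_ne_zero hp hd hpd
  have hq0 : T.deg q = 0 := by
    have hdeg := congrArg T.deg hcp
    rw [map_mul, deg_bar, map_add, map_add, map_one, hdc, hdd] at hdeg
    linear_combination -hdeg
  rw [hcp, hInt.eq_zero_of_deg_eq_zero hq hq0, add_zero]

lemma ip_bar_mul_ne_zero_of_sq_eq_add (hc : c ∈ T.B) (hw : w ∈ T.B) (h : b * b = c + w) :
    T.ip (T.bar b * c) b ≠ 0 := by
  rw [ip_mul_left, T.bar_bar, h, T.ip_symm]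
  simpa using ip_add_ne_zero hc (mem_cone_of_mem hw) (zero_mem _)

lemma bar_mul_notMem_of_deg_three (hb : b ∈ T.B) (hdb : T.deg b = 3) (hdc : T.deg c = 3)
    (h : T.ip (T.bar b * c) b ≠ 0) : T.bar b * c ∉ T.B := fun hbc =>
  h (T.ip_eq_zero_of_deg_ne hbc hb (by rw [map_mul, deg_bar, hdb, hdc]; norm_num))

lemma Integral.exists_bar_mul_eq_add (hInt : T.Integral) (hb : b ∈ T.B) (hc : c ∈ T.B)
    (hd : d ∈ T.B) (hd1 : d ≠ 1) (hbb : T.bar b * b = 1 + d) (hcc : T.bar c * c = 1 + d)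
    (h : T.ip (T.bar b * c) b ≠ 0) : ∃ x ∈ T.B, T.bar b * c = b + x := by
  refine exists_eq_add_of_ip_self_eq_two (hInt.mul_mem_cone (T.bar_mem b hb) hc) ?_ hb h
  rw [T.ip_mul_mul_of_bar_mul_self (d := d) (by rw [T.bar_bar, mul_comm, hbb]), mul_comm c, hcc,
    T.ip_self c hc, map_add, LinearMap.add_apply, T.ip_ne 1 T.one_mem d hd hd1.symm,
    T.ip_self d hd]
  norm_num

lemma bar_ne_self_of_bar_mul_eq_add (hb : b ∈ T.B) (hx : x ∈ T.B) (hcr : T.bar c = c)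
    (h : T.ip (c * c) (b * b) = 0)
    (hbc : T.bar b * c = b + x) : T.bar x ≠ x := by
  intro hxr
  have hbc' : b * c = T.bar b + x := by
    have hbar := congrArg T.bar hbc
    rwa [map_mul, map_add, T.bar_bar, hcr, hxr] at hbar
  have horth : T.ip (b * c) (T.bar b * c) = 0 := by
    rw [ip_mul_right, hcr, T.ip_symm, mul_left_comm, ip_mul_left, T.bar_bar, h]
  rw [hbc', hbc, add_comm, add_comm b] at horth
  exact ip_add_ne_zero hx (mem_cone_of_mem (T.bar_mem b hb)) (mem_cone_of_mem hb) horth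

lemma Integral.ip_mul_mul_eq_zero_of_deg_three (hInt : T.Integral) (hSmall : T.NoSmall)
    (hd : d ∈ T.B) (hdd : T.deg d = 8) (hcc : T.bar c * c = 1 + d) (hu : u ∈ T.B)
    (hv : v ∈ T.B) (hdu : T.deg u = 3) (hdv : T.deg v = 3) (huv : u ≠ v) :
    T.ip (c * u) (c * v) = 0 := by
  rw [T.ip_mul_mul_of_bar_mul_self hcc, T.ip_ne u hu v hv huv, zero_add]
  by_contra hne
  obtain ⟨z, hz, huvz⟩ :=
    exists_eq_add_of_ip_ne_zero (hInt.mul_mem_cone hu (T.bar_mem v hv)) hd hne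
  refine hInt.deg_ne_one hSmall hz ?_ ?_
  · have hone : T.ip (u * T.bar v) 1 = 0 := by
      rw [ip_mul_bar, mul_one, T.ip_ne v hv u hu huv.symm]
    rwa [huvz, map_add, LinearMap.add_apply,
      T.ip_eq_zero_of_deg_ne hd T.one_mem (by norm_num [hdd]), zero_add] at hone
  · have hdeg := congrArg T.deg huvz
    rw [map_mul, deg_bar, map_add, hdu, hdv, hdd] at hdeg
    linear_combination -hdeg

lemma Integral.mul_bar_ne_add_of_deg_three (hInt : T.Integral) (hSmall : T.NoSmall)
    (hd : d ∈ T.B) (hdd : T.deg d = 8) (hc : c ∈ T.B) (hdc : T.deg c = 3)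
    (hcc : T.bar c * c = 1 + d) (hw : w ∈ T.B) (hdw : T.deg w = 6) (hu : u ∈ T.B) (hv : v ∈ T.B)
    (hdu : T.deg u = 3) (hdv : T.deg v = 3) (hz : z ∈ T.cone) : w * T.bar c ≠ u + v + z := by
  intro hwc
  have hucone := mem_cone_of_mem hu
  have hvcone := mem_cone_of_mem hv
  by_cases huv : u = v
  · subst huv
    obtain ⟨n, hn⟩ := hz u hu
    have hmult : T.ip (c * u) w = (1 + 1 + n : ℕ) := by
      rw [← ip_mul_bar, hwc, map_add, map_add, LinearMap.add_apply, LinearMap.add_apply,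
        T.ip_self u hu, hn]
      norm_cast
    have hle : (1 + 1 + n) * 6 ≤ 9 := hInt.mul_le_of_ip_eq (hInt.mul_mem_cone hc hu) hw hmult
      (by exact_mod_cast hdw) (by rw [map_mul, hdc, hdu]; norm_num)
    omega
  · have hcu : T.ip (c * u) w ≠ 0 := by
      rw [← ip_mul_bar, hwc, add_assoc]
      simpa using ip_add_ne_zero hu (add_mem hvcone hz) (zero_mem _)
    have hcv : T.ip (c * v) w ≠ 0 := by
      rw [← ip_mul_bar, hwc, add_comm u, add_assoc]
      simpa using ip_add_ne_zero hv (add_mem hucone hz) (zero_mem _)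
    exact ip_ne_zero_of_common_constituent (hInt.mul_mem_cone hc hu) (hInt.mul_mem_cone hc hv)
      hw hcu hcv (hInt.ip_mul_mul_eq_zero_of_deg_three hSmall hd hdd hcc hu hv hdu hdv huv)

lemma Integral.exists_ip_mul_self_le_four (hInt : T.Integral) (hd : d ∈ T.B)
    (hdd : T.deg d = 8) (hcc : T.bar c * c = 1 + d) (hv : v ∈ T.B) (hdv : T.deg v = 5) :
    ∃ n : ℕ, T.ip (c * v) (c * v) = n ∧ n ≤ 4 := by
  have hvv : v * T.bar v ∈ T.cone := hInt.mul_mem_cone hv (T.bar_mem v hv)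
  obtain ⟨m, hm⟩ := hvv d hd
  have hle : m * 8 ≤ 25 := hInt.mul_le_of_ip_eq hvv hd hm (by exact_mod_cast hdd)
    (by rw [map_mul, deg_bar, hdv]; norm_num)
  refine ⟨1 + m, ?_, by omega⟩
  rw [T.ip_mul_mul_of_bar_mul_self hcc, T.ip_self v hv, hm]
  push_cast
  rfl

lemma Integral.ip_mul_ne_two_of_deg_five (hInt : T.Integral) (hd : d ∈ T.B) (hdd : T.deg d = 8)
    (hc : c ∈ T.B) (hdc : T.deg c = 3) (hcc : T.bar c * c = 1 + d) (hw : w ∈ T.B)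
    (hdw : T.deg w = 6) (hv : v ∈ T.B) (hdv : T.deg v = 5) : T.ip (c * v) w ≠ 2 := by
  intro h
  obtain ⟨p, hp, hcv⟩ := exists_eq_nsmul_add (m := 2) (hInt.mul_mem_cone hc hv) hw
    (by exact_mod_cast h)
  have hp0 : p ≠ 0 := by
    rintro rfl
    have hdeg := congrArg T.deg hcv
    rw [map_mul, add_zero, map_nsmul, hdc, hdv, hdw] at hdeg
    norm_num at hdeg
  obtain ⟨k, hk⟩ := exists_ip_eq_natCast (mem_cone_of_mem hw) hp
  obtain ⟨l, hl⟩ := exists_ip_eq_natCast hp hp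
  have hl0 : l ≠ 0 := fun hl0 => ip_self_ne_zero hp hp0 (by rw [hl, hl0, Nat.cast_zero])
  have hnorm : T.ip (c * v) (c * v) = (4 + 4 * k + l : ℕ) := by
    rw [hcv, ip_add_self, hl]
    simp only [two_nsmul, map_add, LinearMap.add_apply, T.ip_self w hw, hk]
    push_cast
    ring
  obtain ⟨n, hn, hn4⟩ := hInt.exists_ip_mul_self_le_four hd hdd hcc hv hdv
  have hkln : 4 + 4 * k + l = n := by exact_mod_cast hnorm.symm.trans hn
  omega

lemma Integral.ne_of_mul_bar_eq_add (hInt : T.Integral) (hd : d ∈ T.B) (hdd : T.deg d = 8)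
    (hc : c ∈ T.B) (hdc : T.deg c = 3) (hcc : T.bar c * c = 1 + d) (hw : w ∈ T.B)
    (hdw : T.deg w = 6) (hu : u ∈ T.B) (hwc : w * T.bar c = d + (u + v)) : u ≠ v := by
  rintro rfl
  have hdu : T.deg u = 5 := by
    have hdeg := congrArg T.deg hwc
    rw [map_mul, deg_bar, map_add, map_add, hdw, hdc, hdd] at hdeg
    linear_combination -hdeg / 2
  refine hInt.ip_mul_ne_two_of_deg_five hd hdd hc hdc hcc hw hdw hu hdu ?_
  rw [← ip_mul_bar, hwc, map_add, map_add, LinearMap.add_apply, LinearMap.add_apply,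
    T.ip_eq_zero_of_deg_ne hd hu (by norm_num [hdd, hdu]), T.ip_self u hu]
  norm_num

lemma Integral.exists_mul_bar_eq_add_deg_ten (hInt : T.Integral) (hd : d ∈ T.B)
    (hdd : T.deg d = 8) (hc : c ∈ T.B) (hdc : T.deg c = 3) (hw : w ∈ T.B) (hdw : T.deg w = 6)
    (h : T.ip (w * T.bar c) d ≠ 0) :
    ∃ p ∈ T.cone, T.deg p = 10 ∧ T.ip p 1 = 0 ∧ w * T.bar c = d + p := by
  obtain ⟨p, hp, hwc⟩ :=
    exists_eq_add_of_ip_ne_zero (hInt.mul_mem_cone hw (T.bar_mem c hc)) hd h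
  refine ⟨p, hp, ?_, ?_, hwc⟩
  · have hdeg := congrArg T.deg hwc
    rw [map_mul, deg_bar, map_add, hdw, hdc, hdd] at hdeg
    linear_combination -hdeg
  · have hone : T.ip (w * T.bar c) 1 = 0 := by
      rw [ip_mul_bar, mul_one, T.ip_eq_zero_of_deg_ne hc hw (by norm_num [hdc, hdw])]
    rwa [hwc, map_add, LinearMap.add_apply,
      T.ip_eq_zero_of_deg_ne hd T.one_mem (by norm_num [hdd]), zero_add] at hone

lemma Integral.exists_mul_bar_eq_sum_of_deg_six (hInt : T.Integral) (hSmall : T.NoSmall)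
    (hd : d ∈ T.B) (hdd : T.deg d = 8) (hc : c ∈ T.B) (hdc : T.deg c = 3)
    (hcc : T.bar c * c = 1 + d) (hw : w ∈ T.B) (hdw : T.deg w = 6)
    (h : T.ip (w * T.bar c) d ≠ 0) :
    ∃ S ⊆ T.B, d ∈ S ∧ (S.card = 2 ∨ S.card = 3) ∧ w * T.bar c = ∑ s ∈ S, s := by
  classical
  obtain ⟨p, hp, hdp, hp1, hwc⟩ := hInt.exists_mul_bar_eq_add_deg_ten hd hdd hc hdc hw hdw h
  rcases hInt.decomposition_of_deg_ten hSmall hp hdp hp1 with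
    hpB | ⟨u, hu, v, hv, rfl⟩ | ⟨u, hu, v, hv, z, hz, hdu, hdv, rfl⟩
  · have hne : d ≠ p := by rintro rfl; norm_num [hdd] at hdp
    exact ⟨{d, p}, by simp [Finset.insert_subset_iff, hd, hpB], by simp,
      .inl (Finset.card_pair hne), by rw [hwc, Finset.sum_pair hne]⟩
  · rw [map_add] at hdp
    have hdu : d ≠ u := by
      rintro rfl
      exact hSmall.2 v hv (by linear_combination hdp - hdd)
    have hdv : d ≠ v := by
      rintro rfl
      exact hSmall.2 u hu (by linear_combination hdp - hdd)
    have huv := hInt.ne_of_mul_bar_eq_add hd hdd hc hdc hcc hw hdw hu hwc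
    exact ⟨{d, u, v}, by simp [Finset.insert_subset_iff, hd, hu, hv], by simp,
      .inr (Finset.card_eq_three.2 ⟨d, u, v, hdu, hdv, huv, rfl⟩),
      by rw [hwc, Finset.sum_insert (by simp [hdu, hdv]), Finset.sum_pair huv]⟩
  · exact absurd (hwc.trans (by abel)) <|
      hInt.mul_bar_ne_add_of_deg_three hSmall hd hdd hc hdc hcc hw hdw hu hv hdu hdv
        (add_mem hz (mem_cone_of_mem hd))

lemma ip_mul_self_eq_one_add (hx : x ∈ T.B) (hw : w ∈ T.B) (hbc : T.bar b * b = T.bar c * c)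
    (hdb : d * b = x + w * T.bar b) (hcd : c * d = w + x * b) (h1 : T.ip (w * T.bar c) d = 1) :
    T.ip (d * b) (d * b) = 1 + T.ip (w * T.bar c) (w * T.bar c) := by
  have horth : T.ip x (w * T.bar b) = 0 := by
    rw [ip_mul_bar, hcd, map_add, LinearMap.add_apply, T.ip_self w hw] at h1
    rw [T.ip_symm, ip_mul_bar, mul_comm]
    linear_combination h1
  have hnorm : T.ip (w * T.bar b) (w * T.bar b) = T.ip (w * T.bar c) (w * T.bar c) := by
    rw [mul_comm w, mul_comm w]
    exact T.ip_mul_mul_congr (by rw [T.bar_bar, T.bar_bar, mul_comm, hbc, mul_comm]) w w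
  rw [hdb, ip_add_self, T.ip_self x hx, horth, hnorm, mul_zero, add_zero]

lemma Integral.ip_mul_self_eq_three_or_four (hInt : T.Integral) (hSmall : T.NoSmall)
    (hb : b ∈ T.B) (hx : x ∈ T.B) (hd : d ∈ T.B) (hdd : T.deg d = 8) (hc : c ∈ T.B)
    (hdc : T.deg c = 3) (hw : w ∈ T.B) (hdw : T.deg w = 6) (hbb : T.bar b * b = 1 + d)
    (hcc : T.bar c * c = 1 + d) (hdb : d * b = x + w * T.bar b) (hcd : c * d = w + x * b) :
    T.ip (d * b) (d * b) = 3 ∨ T.ip (d * b) (d * b) = 4 := by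
  have hwcd : T.ip (w * T.bar c) d ≠ 0 := by
    rw [ip_mul_bar, hcd]
    simpa using ip_add_ne_zero hw (hInt.mul_mem_cone hx hb) (zero_mem _)
  obtain ⟨S, hS, hdS, hcard, hwc⟩ :=
    hInt.exists_mul_bar_eq_sum_of_deg_six hSmall hd hdd hc hdc hcc hw hdw hwcd
  have hnorm := ip_mul_self_eq_one_add hx hw (hbb.trans hcc.symm) hdb hcd
    (by rw [hwc, T.ip_sum_of_mem hS hdS])
  rw [hnorm, hwc, T.ip_sum_self hS]
  rcases hcard with h | h <;> norm_num [h]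

end TAData

theorem stmt_17_general {A : Type} [CommRing A] [Algebra ℂ A] (T : TAData A)
    (hInt : T.Integral) (hSmall : T.NoSmall)
    (b3 b8 c3 b6 : A)
    (hb3 : b3 ∈ T.B) (hd3 : T.deg b3 = 3)
    (hb8 : b8 ∈ T.B) (hd8 : T.deg b8 = 8)
    (hmul : T.bar b3 * b3 = 1 + b8)
    (hc3 : c3 ∈ T.B) (hdc3 : T.deg c3 = 3) (hrealc3 : T.bar c3 = c3)
    (hb6 : b6 ∈ T.B) (hd6 : T.deg b6 = 6)
    (hsq : b3 * b3 = c3 + b6) :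
    c3 * c3 = 1 + b8 ∧
    ∃ x6 ∈ T.B, T.deg x6 = 6 ∧ T.bar x6 ≠ x6 ∧
      T.bar b3 * c3 = b3 + x6 ∧
      b8 * b3 = x6 + b6 * T.bar b3 ∧
      T.bar b6 * c3 = x6 * T.bar b3 ∧
      c3 * b8 = b6 + x6 * b3 ∧
      (T.ip (b8 * b3) (b8 * b3) = 3 ∨ T.ip (b8 * b3) (b8 * b3) = 4) := by
  have hconst := TAData.ip_bar_mul_ne_zero_of_sq_eq_add hc3 hb6 hsq
  have hnotMem := TAData.bar_mul_notMem_of_deg_three hb3 hd3 hdc3 hconst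
  have hcc : T.bar c3 * c3 = 1 + b8 :=
    hInt.bar_mul_self_eq_of_bar_mul_notMem hb3 hc3 hb8 hdc3 hd8 hmul hnotMem
  have hcsq : c3 * c3 = 1 + b8 := by rwa [hrealc3] at hcc
  have hb81 : b8 ≠ 1 := by rintro rfl; norm_num at hd8
  obtain ⟨x6, hx6, hbc⟩ := hInt.exists_bar_mul_eq_add hb3 hc3 hb8 hb81 hmul hcc hconst
  have hdx6 : T.deg x6 = 6 := by
    have hdeg := congrArg T.deg hbc
    rw [map_mul, T.deg_bar, map_add, hd3, hdc3] at hdeg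
    linear_combination -hdeg
  have horth : T.ip (c3 * c3) (b3 * b3) = 0 := by
    simp [hcsq, hsq, T.ip_eq_zero_of_deg_ne, T.one_mem, hc3, hb6, hb8, hdc3, hd6, hd8]
  have hx6r := TAData.bar_ne_self_of_bar_mul_eq_add hb3 hx6 hrealc3 horth hbc
  have hbarsq : T.bar b3 * T.bar b3 = c3 + T.bar b6 := by rw [← map_mul, hsq, map_add, hrealc3]
  have h83 : b8 * b3 = x6 + b6 * T.bar b3 := by
    linear_combination T.bar b3 * hsq - b3 * hmul + hbc
  have h63 : T.bar b6 * c3 = x6 * T.bar b3 := by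
    linear_combination -c3 * hbarsq + T.bar b3 * hbc - hcsq + hmul
  have h38 : c3 * b8 = b6 + x6 * b3 := by linear_combination b3 * hbc - c3 * hmul + hsq
  exact ⟨hcsq, x6, hx6, hdx6, hx6r, hbc, h83, h63, h38,
    hInt.ip_mul_self_eq_three_or_four hSmall hb3 hx6 hb8 hd8 hc3 hdc3 hb6 hd6 hmul hcc h83 h38⟩

/-- Lemma 8.1: for a NITA generated by non-real `b₃` with
`b̄₃b₃ = 1 + b₈` and `b₃² = c₃ + b₆`, `c₃` real: `c₃² = 1 + b₈`,
`b̄₃c₃ = b₃ + x₆` with `x₆` non-real of degree 6, `b₈b₃ = x₆ + b₆b̄₃`,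
`b̄₆c₃ = x₆b̄₃`, `c₃b₈ = b₆ + x₆b₃` and `(b₈b₃, b₈b₃) ∈ {3, 4}`. -/
theorem stmt_17 {A : Type} [CommRing A] [Algebra ℂ A] (T : TAData A)
    (hInt : T.Integral) (hSmall : T.NoSmall)
    (b3 b8 c3 b6 : A)
    (hb3 : b3 ∈ T.B) (hd3 : T.deg b3 = 3) (hnr : T.bar b3 ≠ b3)
    (hgen : T.GeneratedBy b3)
    (hb8 : b8 ∈ T.B) (hd8 : T.deg b8 = 8)
    (hmul : T.bar b3 * b3 = 1 + b8)
    (hc3 : c3 ∈ T.B) (hdc3 : T.deg c3 = 3) (hrealc3 : T.bar c3 = c3)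
    (hb6 : b6 ∈ T.B) (hd6 : T.deg b6 = 6)
    (hsq : b3 * b3 = c3 + b6) :
    c3 * c3 = 1 + b8 ∧
    ∃ x6 ∈ T.B, T.deg x6 = 6 ∧ T.bar x6 ≠ x6 ∧
      T.bar b3 * c3 = b3 + x6 ∧
      b8 * b3 = x6 + b6 * T.bar b3 ∧
      T.bar b6 * c3 = x6 * T.bar b3 ∧
      c3 * b8 = b6 + x6 * b3 ∧
      (T.ip (b8 * b3) (b8 * b3) = 3 ∨ T.ip (b8 * b3) (b8 * b3) = 4) :=
  stmt_17_general T hInt hSmall b3 b8 c3 b6 hb3 hd3 hb8 hd8 hmul hc3 hdc3 hrealc3 hb6 hd6 hsq
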